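/- arXiv:2003.10346 — 3 statements merged into one kernel-verified Lean document; each statement's English description precedes it below -/
import Mathlib

section
/- Let q ∈ (1/2,1), δ ∈ [1, 1/q], 0 ≤ s < t and w > 0. For r ∈ (s,t) set μ(r) = min(t−r, r−s) and ν(r) = max(t−r, r−s). There is a constant C depending only on q such that ∫_s^t 𝟙{ν(r) > μ(r) + w} · [ ν(r)² − (μ(r) + w)² ]^{δ(1−2q)} dr ≤ C (t−s)^{δ(1−2q)+1} [ (t−s)² − w² ]^{δ(1/2 − q)} 𝟙{w < t−s}. -/
open MeasureTheory Real

noncomputable section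

/-!
Put `T = t - s` and `a = δ (1 - 2q)`. Since `ν + μ = T` and `ν - μ = |(t - r) - (r - s)|`, the base
of the power factors as `ν² - (μ + w)² = (|(t - r) - (r - s)| - w) (T + w)`. Folding `[s, t]` at its
midpoint therefore turns the integral into `∫_w^T ((v - w) (T + w))^a dv`, which equals
`(T² - w²)^(a + 1) / ((a + 1) (T + w))` when `w < T`. It remains to write
`(T² - w²)^(a + 1) = (T² - w²)^(a / 2) (T² - w²)^(a / 2 + 1)`, to bound the last factor by
`T^(a + 2)` and `T + w` from below by `T`, and to note that `δ ≤ 1 / q` keeps `a + 1` at or above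
`(1 - q) / q`.
-/

theorem intervalIntegral_comp_abs (f : ℝ → ℝ) {T : ℝ} (hT : 0 ≤ T) :
    ∫ x in -T..T, f |x| = 2 * ∫ x in 0..T, f x := by
  have indicator_abs : (Set.Icc (-T) T).indicator (fun x => f |x|) =
      fun x => (Set.Iic T).indicator f |x| := by
    ext x
    simp only [Set.indicator_apply, Set.mem_Icc, Set.mem_Iic, abs_le]
  rw [intervalIntegral.integral_of_le (by linarith), intervalIntegral.integral_of_le hT,
    ← integral_Icc_eq_integral_Ioc, ← integral_indicator measurableSet_Icc, indicator_abs,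
    integral_comp_abs, setIntegral_indicator measurableSet_Iic, Set.Ioi_inter_Iic]

theorem intervalIntegral_comp_abs_sub_sub (f : ℝ → ℝ) {s t : ℝ} (hst : s ≤ t) :
    ∫ r in s..t, f |(t - r) - (r - s)| = ∫ v in 0..t - s, f v := by
  calc ∫ r in s..t, f |(t - r) - (r - s)|
      = ∫ r in s..t, f |s + t - 2 * r| := by
        congr! 4 with r
        ring
    _ = 2⁻¹ * ∫ x in -(t - s)..t - s, f |x| := by
        rw [intervalIntegral.integral_comp_sub_mul (fun x => f |x|) two_ne_zero, smul_eq_mul]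
        congr 2 <;> ring
    _ = ∫ v in 0..t - s, f v := by
        rw [intervalIntegral_comp_abs f (sub_nonneg.2 hst), inv_mul_cancel_left₀ two_ne_zero]

theorem intervalIntegral_ite_lt {E : Type*} [NormedAddCommGroup E] [NormedSpace ℝ E]
    {μ : Measure ℝ} (f : ℝ → E) {a w : ℝ} (haw : a ≤ w) (b : ℝ) :
    ∫ v in a..b, (if w < v then f v else 0) ∂μ = if w < b then ∫ v in w..b, f v ∂μ else 0 := by
  split_ifs with hwb
  · change ∫ v in a..b, (Set.Ioi w).indicator f v ∂μ = _
    rw [intervalIntegral.integral_of_le (haw.trans hwb.le),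
      intervalIntegral.integral_of_le hwb.le, setIntegral_indicator measurableSet_Ioi,
      Set.Ioc_inter_Ioi, max_eq_right haw]
  · have eqOn_zero : Set.EqOn (fun v => if w < v then f v else 0) 0 (Set.uIcc a b) :=
      fun v hv => if_neg (hv.2.trans (max_le haw (not_lt.1 hwb))).not_gt
    rw [intervalIntegral.integral_congr eqOn_zero]
    exact intervalIntegral.integral_zero

theorem integral_sub_mul_rpow {a c : ℝ} (ha : -1 < a) (hc : c ≠ 0) (w T : ℝ) :
    ∫ v in w..T, ((v - w) * c) ^ a = ((T - w) * c) ^ (a + 1) / ((a + 1) * c) := by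
  calc ∫ v in w..T, ((v - w) * c) ^ a
      = ∫ v in w..T, (c * v - c * w) ^ a := by
        congr! 3 with v
        ring
    _ = c⁻¹ * ∫ x in 0..(T - w) * c, x ^ a := by
        rw [intervalIntegral.integral_comp_mul_sub (fun x => x ^ a) hc, smul_eq_mul]
        congr 2 <;> ring
    _ = ((T - w) * c) ^ (a + 1) / ((a + 1) * c) := by
        rw [integral_rpow (Or.inl ha), zero_rpow (by linarith), sub_zero, inv_mul_eq_div, div_div]

theorem min_add_lt_max_iff {R : Type*} [AddCommGroup R] [LinearOrder R] [IsOrderedAddMonoid R]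
    {x y w : R} : min x y + w < max x y ↔ w < |x - y| := by
  rw [← max_sub_min_eq_abs', lt_sub_iff_add_lt']

theorem max_sq_sub_min_add_sq {R : Type*} [CommRing R] [LinearOrder R] [IsOrderedAddMonoid R]
    (x y w : R) : max x y ^ 2 - (min x y + w) ^ 2 = (|x - y| - w) * (x + y + w) := by
  rw [← max_sub_min_eq_abs', ← min_add_max x y]
  ring

theorem integral_max_sq_sub_min_add_sq_rpow {a s t w : ℝ} (ha : -1 < a) (hst : s ≤ t)
    (hw : 0 ≤ w) :
    (∫ r in s..t,
        if min (t - r) (r - s) + w < max (t - r) (r - s) then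
          ((max (t - r) (r - s)) ^ 2 - (min (t - r) (r - s) + w) ^ 2) ^ a
        else 0) =
      if w < t - s then
        ((t - s) ^ 2 - w ^ 2) ^ (a + 1) / ((a + 1) * (t - s + w))
      else 0 := by
  simp only [min_add_lt_max_iff, max_sq_sub_min_add_sq, sub_add_sub_cancel]
  rw [intervalIntegral_comp_abs_sub_sub
      (fun v => if w < v then ((v - w) * (t - s + w)) ^ a else 0) hst,
    intervalIntegral_ite_lt _ hw]
  refine if_ctx_congr Iff.rfl (fun hwT => ?_) fun _ => rfl
  rw [integral_sub_mul_rpow ha (by linarith), sq_sub_sq, mul_comm (t - s + w)]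

theorem sq_sub_sq_rpow_div_add_le {a w T : ℝ} (ha : -2 ≤ a) (hw : 0 ≤ w) (hwT : w < T) :
    (T ^ 2 - w ^ 2) ^ (a + 1) / (T + w) ≤ T ^ (a + 1) * (T ^ 2 - w ^ 2) ^ (a / 2) := by
  have hT : 0 < T := hw.trans_lt hwT
  have hD : 0 < T ^ 2 - w ^ 2 := sub_pos.2 (pow_lt_pow_left₀ hwT hw two_ne_zero)
  calc (T ^ 2 - w ^ 2) ^ (a + 1) / (T + w)
      = (T ^ 2 - w ^ 2) ^ (a / 2 + 1) / (T + w) * (T ^ 2 - w ^ 2) ^ (a / 2) := by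
        rw [div_mul_eq_mul_div, ← rpow_add hD]
        ring_nf
    _ ≤ (T ^ 2) ^ (a / 2 + 1) / T * (T ^ 2 - w ^ 2) ^ (a / 2) := by
        gcongr
        · linarith
        · exact sub_le_self _ (sq_nonneg w)
        · exact le_add_of_nonneg_right hw
    _ = T ^ (a + 1) * (T ^ 2 - w ^ 2) ^ (a / 2) := by
        rw [← rpow_natCast_mul hT.le, ← rpow_sub_one hT.ne']
        ring_nf

theorem integral_max_sq_sub_min_add_sq_rpow_le {a s t w : ℝ} (ha : -1 < a) (hst : s ≤ t)
    (hw : 0 ≤ w) :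
    (∫ r in s..t,
        if min (t - r) (r - s) + w < max (t - r) (r - s) then
          ((max (t - r) (r - s)) ^ 2 - (min (t - r) (r - s) + w) ^ 2) ^ a
        else 0) ≤
      (a + 1)⁻¹ * ((t - s) ^ (a + 1) * ((t - s) ^ 2 - w ^ 2) ^ (a / 2) *
        (if w < t - s then 1 else 0)) := by
  rw [integral_max_sq_sub_min_add_sq_rpow ha hst hw]
  split_ifs with hwT
  · rw [mul_one, div_mul_eq_div_div_swap, div_eq_inv_mul]
    have := sq_sub_sq_rpow_div_add_le (by linarith) hw hwT (a := a)
    have : 0 < a + 1 := by linarith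
    gcongr
  · rw [mul_zero, mul_zero]

theorem one_sub_div_self_le_mul_one_sub_two_mul_add_one {q δ : ℝ} (hq : 1 / 2 ≤ q)
    (hδ : δ ≤ 1 / q) : (1 - q) / q ≤ δ * (1 - 2 * q) + 1 := by
  have : 0 < q := by linarith
  calc (1 - q) / q = 1 / q * (1 - 2 * q) + 1 := by field_simp; ring
    _ ≤ δ * (1 - 2 * q) + 1 := by
      gcongr ?_ + 1
      exact mul_le_mul_of_nonpos_right hδ (by linarith)

theorem stmt_16_general {q δ s t w : ℝ} (hq : q ∈ Set.Ico (1 / 2 : ℝ) 1) (hδ : δ ≤ 1 / q)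
    (hst : s ≤ t) (hw : 0 ≤ w) :
    (∫ r in s..t,
        if min (t - r) (r - s) + w < max (t - r) (r - s) then
          ((max (t - r) (r - s)) ^ 2 - (min (t - r) (r - s) + w) ^ 2) ^ (δ * (1 - 2 * q))
        else 0) ≤
      q / (1 - q) * (t - s) ^ (δ * (1 - 2 * q) + 1) *
        ((t - s) ^ 2 - w ^ 2) ^ (δ * (1 / 2 - q)) * (if w < t - s then 1 else 0) := by
  have hc : 0 < (1 - q) / q := div_pos (sub_pos.2 hq.2) (by linarith [hq.1])
  have hexp := one_sub_div_self_le_mul_one_sub_two_mul_add_one hq.1 hδ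
  have hhalf : δ * (1 / 2 - q) = δ * (1 - 2 * q) / 2 := by ring
  rw [hhalf, mul_assoc, mul_assoc, ← mul_assoc (_ ^ _), ← inv_div]
  refine (integral_max_sq_sub_min_add_sq_rpow_le (by linarith) hst hw).trans ?_
  gcongr
  split_ifs with hwT
  · have : 0 ≤ (t - s) ^ 2 - w ^ 2 := sub_nonneg.2 (pow_le_pow_left₀ hw hwT.le 2)
    have : 0 ≤ t - s := sub_nonneg.2 hst
    positivity
  · exact (mul_zero _).ge

/-- For `q ∈ (1/2,1)` there is a constant `C` depending only on `q` such that for all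
`δ ∈ [1,1/q]`, `0 ≤ s < t`, `w > 0`, with `μ(r) = min(t-r,r-s)` and `ν(r) = max(t-r,r-s)`,
`∫_s^t 𝟙{ν(r) > μ(r)+w} [ν(r)² - (μ(r)+w)²]^{δ(1-2q)} dr`
`≤ C (t-s)^{δ(1-2q)+1} [(t-s)²-w²]^{δ(1/2-q)} 𝟙{w < t-s}`. -/
theorem stmt_16 (q : ℝ) (hq : q ∈ Set.Ioo (1/2 : ℝ) 1) :
    ∃ C : ℝ, ∀ δ s t w : ℝ, δ ∈ Set.Icc 1 (1/q) → 0 ≤ s → s < t → 0 < w →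
      (∫ r in s..t,
          if min (t - r) (r - s) + w < max (t - r) (r - s) then
            ((max (t - r) (r - s)) ^ 2 - (min (t - r) (r - s) + w) ^ 2) ^ (δ * (1 - 2 * q))
          else 0) ≤
        C * (t - s) ^ (δ * (1 - 2 * q) + 1) * ((t - s) ^ 2 - w ^ 2) ^ (δ * (1/2 - q)) *
          (if w < t - s then 1 else 0) := by
  exact ⟨q / (1 - q), fun δ s t w hδ _ hst hw =>
    stmt_16_general ⟨hq.1.le, hq.2⟩ hδ.2 hst.le hw.le⟩
end
end

section
/- Let q ∈ (1/2,1), δ ∈ [1, 1/q], 0 ≤ s < t and w > 0. For r ∈ (s,t) set μ(r) = min(t−r, r−s) and ν(r) = max(t−r, r−s). There is a constant C depending only on q such that ∫_s^t 𝟙{|μ(r) − w| < ν(r) < μ(r) + w} · [ (w + μ(r))² − ν(r)² ]^{δ(1/2 − q)} · [ ν(r)² − (μ(r) − w)² ]^{δ(1/2 − q)} dr ≤ C (t−s)^{δ(1−2q)+1} [ (t−s)² − w² ]^{δ(1/2 − q)} 𝟙{w < t−s}. -/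
open MeasureTheory Real

noncomputable section

/-!
The indicator says that `μ`, `ν`, `w` are the sides of a nondegenerate triangle, and the product of
the two differences of squares is sixteen times its squared area (Heron), so the integrand is
symmetric in the sides. As `μ + ν = t - s =: T`, regrouping the factors turns it, with `a` the
common exponent and `y = 2 r - (s + t)`, into `(T² - w²) ^ a (w² - y²) ^ a` on `|y| < w < T`.
For `w < T` the substitution `y = w u` evaluates the integral as
`(T² - w²) ^ a * w ^ (2 a + 1) * (1/2) ∫_{-1}^1 (1 - u²) ^ a du`.
Since `δ ≤ 1/q`, one has `a ≥ 1/(2q) - 1 > -1/2`. Hence `w ^ (2 a + 1) ≤ T ^ (2 a + 1)`, and the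
last integral is at most the one with exponent `1/(2q) - 1`.
-/

/-- The weight `(4 A) ^ (2 a)`, where `A` is the area of the triangle with sides `x`, `y`, `w`,
extended by `0` to lengths that violate the strict triangle inequality. The power is distributed
over two factors of Heron's formula `(4 A)² = ((w + x)² - y²) (y² - (x - w)²)`. -/
def triangleWeight (a x y w : ℝ) : ℝ :=
  if |x - w| < y ∧ y < x + w then
    ((w + x) ^ 2 - y ^ 2) ^ a * (y ^ 2 - (x - w) ^ 2) ^ a
  else 0

section TriangleWeight

variable {x y w : ℝ}

lemma abs_sub_lt_and_lt_add_iff : |x - w| < y ∧ y < x + w ↔ |x - y| < w ∧ w < x + y := by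
  simp only [abs_lt]
  constructor <;> rintro ⟨⟨_, _⟩, _⟩ <;> refine ⟨⟨?_, ?_⟩, ?_⟩ <;> linarith

lemma triangleWeight_of_abs_sub_lt (a : ℝ) (h : |x - y| < w) (h' : w < x + y) :
    triangleWeight a x y w = ((x + y) ^ 2 - w ^ 2) ^ a * (w ^ 2 - (x - y) ^ 2) ^ a := by
  have hxw := abs_sub_lt_and_lt_add_iff.2 ⟨h, h'⟩
  have hw : 0 < w := (abs_nonneg _).trans_lt h
  have hy : 0 < y := (abs_nonneg _).trans_lt hxw.1
  rw [triangleWeight, if_pos hxw,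
    ← mul_rpow (sub_nonneg.2 (pow_le_pow_left₀ hy.le (by linarith [hxw.2]) 2))
      (sub_nonneg.2 (sq_le_sq.2 (hxw.1.le.trans (le_abs_self y)))),
    ← mul_rpow (sub_nonneg.2 (pow_le_pow_left₀ hw.le h'.le 2))
      (sub_nonneg.2 (sq_le_sq.2 (h.le.trans (le_abs_self w))))]
  congr 1
  ring

lemma triangleWeight_of_not (a : ℝ) (h : ¬(|x - y| < w ∧ w < x + y)) :
    triangleWeight a x y w = 0 :=
  if_neg (abs_sub_lt_and_lt_add_iff.not.2 h)

lemma triangleWeight_comm (a x y w : ℝ) : triangleWeight a x y w = triangleWeight a y x w := by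
  by_cases h : |x - y| < w ∧ w < x + y
  · rw [triangleWeight_of_abs_sub_lt a h.1 h.2,
      triangleWeight_of_abs_sub_lt a (abs_sub_comm x y ▸ h.1) (add_comm x y ▸ h.2),
      add_comm, sub_sq_comm]
  · rw [triangleWeight_of_not a h, triangleWeight_of_not a (by rwa [abs_sub_comm, add_comm])]

lemma triangleWeight_min_max (a x y w : ℝ) :
    triangleWeight a (min x y) (max x y) w = triangleWeight a x y w := by
  rcases le_total x y with h | h
  · rw [min_eq_left h, max_eq_right h]
  · rw [min_eq_right h, max_eq_left h, triangleWeight_comm]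

end TriangleWeight

lemma intervalIntegrable_one_sub_sq_rpow {a : ℝ} (ha : -1 < a) :
    IntervalIntegrable (fun u : ℝ => (1 - u ^ 2) ^ a) volume (-1) 1 := by
  have right_half : IntervalIntegrable (fun u : ℝ => (1 - u ^ 2) ^ a) volume 0 1 := by
    have singular : IntervalIntegrable (fun u : ℝ => (1 - u) ^ a) volume 0 1 := by
      simpa using (intervalIntegral.intervalIntegrable_rpow' (a := 1) (b := 0) ha).comp_sub_left 1
    have regular : ContinuousOn (fun u : ℝ => (1 + u) ^ a) (Set.uIcc 0 1) := by
      rw [Set.uIcc_of_le zero_le_one]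
      exact ContinuousOn.rpow_const (by fun_prop) fun u hu => Or.inl (by linarith [hu.1])
    refine (singular.mul_continuousOn regular).congr fun u hu => ?_
    rw [Set.uIoc_of_le zero_le_one] at hu
    rw [← mul_rpow (by linarith [hu.2]) (by linarith [hu.1])]
    congr 1
    ring
  have left_half : IntervalIntegrable (fun u : ℝ => (1 - u ^ 2) ^ a) volume (-1) 0 := by
    simpa using (right_half.comp_sub_left 0).symm
  exact left_half.trans right_half

lemma integral_one_sub_sq_rpow_nonneg (a : ℝ) : 0 ≤ ∫ u in (-1 : ℝ)..1, (1 - u ^ 2) ^ a :=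
  intervalIntegral.integral_nonneg (by norm_num) fun _ hu =>
    rpow_nonneg (by nlinarith [hu.1, hu.2]) a

lemma antitoneOn_integral_one_sub_sq_rpow :
    AntitoneOn (fun a : ℝ => ∫ u in (-1 : ℝ)..1, (1 - u ^ 2) ^ a) (Set.Ioi (-1)) := by
  intro b hb a ha hba
  refine intervalIntegral.integral_mono_on_of_le_Ioo (by norm_num)
    (intervalIntegrable_one_sub_sq_rpow ha) (intervalIntegrable_one_sub_sq_rpow hb) fun u hu => ?_
  exact rpow_le_rpow_of_exponent_ge (by nlinarith [hu.1, hu.2]) (by nlinarith) hba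

lemma integral_sq_sub_sq_rpow (a : ℝ) {w : ℝ} (hw : 0 < w) :
    ∫ y in (-w)..w, (w ^ 2 - y ^ 2) ^ a =
      w ^ (2 * a + 1) * ∫ u in (-1 : ℝ)..1, (1 - u ^ 2) ^ a := by
  have factor (u : ℝ) (hu : u ∈ Set.uIcc (-1) 1) :
      (w ^ 2 - (w * u) ^ 2) ^ a = w ^ (2 * a) * (1 - u ^ 2) ^ a := by
    rw [Set.uIcc_of_le (by norm_num)] at hu
    rw [rpow_mul hw.le, rpow_two, ← mul_rpow (by positivity) (by nlinarith [hu.1, hu.2])]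
    congr 1
    ring
  calc ∫ y in (-w)..w, (w ^ 2 - y ^ 2) ^ a
      = w * ∫ u in (-1 : ℝ)..1, (w ^ 2 - (w * u) ^ 2) ^ a := by
        rw [intervalIntegral.mul_integral_comp_mul_left (f := fun y => (w ^ 2 - y ^ 2) ^ a)]
        simp only [mul_neg, mul_one]
    _ = w * ∫ u in (-1 : ℝ)..1, w ^ (2 * a) * (1 - u ^ 2) ^ a := by
        rw [intervalIntegral.integral_congr factor]
    _ = w ^ (2 * a + 1) * ∫ u in (-1 : ℝ)..1, (1 - u ^ 2) ^ a := by
        rw [intervalIntegral.integral_const_mul, rpow_add_one hw.ne']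
        ring

section Integral

variable {s t w : ℝ}

lemma triangleWeight_sub_sub_eq_indicator (a : ℝ) (hwT : w < t - s) (r : ℝ) :
    triangleWeight a (t - r) (r - s) w =
      (Set.Ioo (-w) w).indicator
        (fun y => ((t - s) ^ 2 - w ^ 2) ^ a * (w ^ 2 - y ^ 2) ^ a) (2 * r - (s + t)) := by
  have sum_eq : t - r + (r - s) = t - s := by ring
  have diff_eq : t - r - (r - s) = -(2 * r - (s + t)) := by ring
  by_cases hr : |2 * r - (s + t)| < w
  · rw [Set.indicator_of_mem (Set.mem_Ioo.2 (abs_lt.1 hr)), triangleWeight_of_abs_sub_lt a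
      (by rwa [diff_eq, abs_neg]) (by rwa [sum_eq]), sum_eq, diff_eq, neg_sq]
  · rw [Set.indicator_of_notMem (hr <| abs_lt.2 <| Set.mem_Ioo.1 ·), triangleWeight_of_not]
    rw [diff_eq, abs_neg]
    exact fun h => hr h.1

lemma integral_triangleWeight_of_lt (a : ℝ) (hw : 0 < w) (hwT : w < t - s) :
    ∫ r in s..t, triangleWeight a (t - r) (r - s) w =
      ((t - s) ^ 2 - w ^ 2) ^ a * w ^ (2 * a + 1) *
        (1 / 2 * ∫ u in (-1 : ℝ)..1, (1 - u ^ 2) ^ a) := by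
  have support_subset : Set.Ioo (-w) w ⊆ Set.Ioc (-(t - s)) (t - s) := fun y hy =>
    ⟨by linarith [hy.1], by linarith [hy.2]⟩
  calc ∫ r in s..t, triangleWeight a (t - r) (r - s) w
      = 2⁻¹ * ∫ y in (-(t - s))..(t - s), (Set.Ioo (-w) w).indicator
          (fun y => ((t - s) ^ 2 - w ^ 2) ^ a * (w ^ 2 - y ^ 2) ^ a) y := by
        simp_rw [triangleWeight_sub_sub_eq_indicator a hwT]
        rw [intervalIntegral.integral_comp_mul_sub _ two_ne_zero, smul_eq_mul]
        ring_nf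
    _ = 2⁻¹ * ∫ y in (-w)..w, ((t - s) ^ 2 - w ^ 2) ^ a * (w ^ 2 - y ^ 2) ^ a := by
        rw [intervalIntegral.integral_of_le (by linarith), setIntegral_indicator measurableSet_Ioo,
          Set.inter_eq_right.2 support_subset, ← integral_Ioc_eq_integral_Ioo,
          ← intervalIntegral.integral_of_le (by linarith)]
    _ = _ := by
        rw [intervalIntegral.integral_const_mul, integral_sq_sub_sq_rpow a hw]
        ring

lemma integral_triangleWeight_of_le (a : ℝ) (hwT : t - s ≤ w) :
    ∫ r in s..t, triangleWeight a (t - r) (r - s) w = 0 := by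
  have vanish (r : ℝ) : triangleWeight a (t - r) (r - s) w = 0 :=
    triangleWeight_of_not a fun h => by linarith [h.2]
  simp only [vanish, intervalIntegral.integral_zero]

end Integral

lemma neg_half_lt_one_div_mul_half_sub {q : ℝ} (hq : q ∈ Set.Ioo (0 : ℝ) 1) :
    -(1 / 2) < 1 / q * (1 / 2 - q) := by
  rw [one_div_mul_eq_div, lt_div_iff₀ hq.1]
  linarith [hq.2]

theorem stmt_17_general {c : ℝ} (hc : -(1 / 2) < c) :
    ∃ C : ℝ, ∀ a s t w : ℝ, c ≤ a → 0 < w →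
      (∫ r in s..t, triangleWeight a (min (t - r) (r - s)) (max (t - r) (r - s)) w) ≤
        C * (t - s) ^ (2 * a + 1) * ((t - s) ^ 2 - w ^ 2) ^ a * (if w < t - s then 1 else 0) := by
  refine ⟨1 / 2 * ∫ u in (-1 : ℝ)..1, (1 - u ^ 2) ^ c, fun a s t w hca hw => ?_⟩
  simp only [triangleWeight_min_max]
  rcases lt_or_ge w (t - s) with hwT | hwT
  · have length_pos : 0 < t - s := hw.trans hwT
    have integral_le : ∫ u in (-1 : ℝ)..1, (1 - u ^ 2) ^ a ≤ ∫ u in (-1 : ℝ)..1, (1 - u ^ 2) ^ c :=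
      antitoneOn_integral_one_sub_sq_rpow (Set.mem_Ioi.2 (by linarith))
        (Set.mem_Ioi.2 (by linarith)) hca
    have integral_nonneg := integral_one_sub_sq_rpow_nonneg a
    have power_le : w ^ (2 * a + 1) ≤ (t - s) ^ (2 * a + 1) :=
      rpow_le_rpow hw.le hwT.le (by linarith)
    have prefactor_nonneg : 0 ≤ ((t - s) ^ 2 - w ^ 2) ^ a := rpow_nonneg (by nlinarith) a
    rw [integral_triangleWeight_of_lt a hw hwT, if_pos hwT, mul_one]
    calc _ ≤ ((t - s) ^ 2 - w ^ 2) ^ a * (t - s) ^ (2 * a + 1) *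
          (1 / 2 * ∫ u in (-1 : ℝ)..1, (1 - u ^ 2) ^ c) := by gcongr
      _ = _ := by ring
  · rw [integral_triangleWeight_of_le a hwT, if_neg hwT.not_gt, mul_zero]

/-- For `q ∈ (1/2,1)` there is a constant `C` depending only on `q` such that for all
`δ ∈ [1,1/q]`, `0 ≤ s < t`, `w > 0`, with `μ(r) = min(t-r,r-s)` and `ν(r) = max(t-r,r-s)`,
`∫_s^t 𝟙{|μ(r)-w| < ν(r) < μ(r)+w} [(w+μ(r))²-ν(r)²]^{δ(1/2-q)} [ν(r)²-(μ(r)-w)²]^{δ(1/2-q)} dr`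
`≤ C (t-s)^{δ(1-2q)+1} [(t-s)²-w²]^{δ(1/2-q)} 𝟙{w < t-s}`. -/
theorem stmt_17 (q : ℝ) (hq : q ∈ Set.Ioo (1/2 : ℝ) 1) :
    ∃ C : ℝ, ∀ δ s t w : ℝ, δ ∈ Set.Icc 1 (1/q) → 0 ≤ s → s < t → 0 < w →
      (∫ r in s..t,
          if |min (t - r) (r - s) - w| < max (t - r) (r - s) ∧
              max (t - r) (r - s) < min (t - r) (r - s) + w then
            ((w + min (t - r) (r - s)) ^ 2 - (max (t - r) (r - s)) ^ 2) ^ (δ * (1/2 - q)) *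
              ((max (t - r) (r - s)) ^ 2 - (min (t - r) (r - s) - w) ^ 2) ^ (δ * (1/2 - q))
          else 0) ≤
        C * (t - s) ^ (δ * (1 - 2 * q) + 1) * ((t - s) ^ 2 - w ^ 2) ^ (δ * (1/2 - q)) *
          (if w < t - s then 1 else 0) := by
  obtain ⟨C, bound⟩ := stmt_17_general (neg_half_lt_one_div_mul_half_sub ⟨by linarith [hq.1], hq.2⟩)
  refine ⟨C, fun δ s t w hδ _ _ hw => ?_⟩
  rw [show δ * (1 - 2 * q) + 1 = 2 * (δ * (1 / 2 - q)) + 1 by ring]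
  exact bound _ s t w (mul_le_mul_of_nonpos_right hδ.2 (by linarith [hq.1])) hw
end
end

section
/- Fix β ∈ (0,2) and t₁, t₂ ∈ (0,∞). For s ∈ (0, min(t₁,t₂)] and R > 0, let 𝒯_s(R) = ∫_0^s dr ∫_{(ℝ²)^6} φ_{t₁,R}(s,y) φ_{t₂,R}(s,z) φ_{t₁,R}(s,y′) φ_{t₂,R}(s,z′) ‖y−z‖^{−β} ‖y′−z′‖^{−β} ‖γ−γ′‖^{−β} G_{s−r}(z−γ) G_{s−r}(z′−γ′) dγ dγ′ dy dz dy′ dz′. Then there is a constant C depending only on β, t₁, t₂ (not on R or s) such that sup_{0 < s ≤ min(t₁,t₂)} 𝒯_s(R) ≤ C · R^{8−3β} for all R ≥ t₁ + t₂. -/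
open MeasureTheory Real

noncomputable section

/-- `ℝ²` with the Euclidean norm. -/
abbrev E2 : Type := EuclideanSpace ℝ (Fin 2)

/-- The fundamental solution of the 2D wave equation. -/
def G (t : ℝ) (x : E2) : ℝ :=
  if ‖x‖ < t then (2 * π * Real.sqrt (t ^ 2 - ‖x‖ ^ 2))⁻¹ else 0

/-- `φ_{t,R}(s,y) = ∫_{B_R} G_{t-s}(x-y) dx`. -/
def phi (t R s : ℝ) (y : E2) : ℝ :=
  ∫ x in Metric.closedBall (0 : E2) R, G (t - s) (x - y)

/-!
Bochner integrals are dominated by lower Lebesgue integrals of norms, to which Tonelli's theorem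
applies. Integrating first over the pairs `(y, z)` and `(y', z')` turns the integrand into the Riesz
energy `∬ P(γ) P(γ') ‖γ - γ'‖^{-β} dγ dγ'` of
`P(γ) = ∬ |φ_{t₁,R}(s,y) φ_{t₂,R}(s,z)| ‖y - z‖^{-β} G_{s-r}(z - γ) dy dz`.

The wave kernel `G_u` has mass `u` and lives on the ball of radius `u`. So `φ_{t,R}(s,·)` is at
most `t` and lives on the ball of radius `2R`, and `P` lives on the ball of radius `3R`. On a ball
of radius `ρ` the Riesz potential of that ball is at most `2π (2ρ)^{2-β} / (2-β)`. Hence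
`P = O(R^{2-β})`, `∫ P = O(R^{2-β} R²)`, and the energy is
`O(R^{2-β} · R^{2-β} · R^{2-β} R²) = O(R^{8-3β})`.
-/

open Metric Set

/-! ### Energies of mixed kernels -/

section Tonelli

variable {X Y : Type*} [MeasurableSpace X] [MeasurableSpace Y]
  {μ : Measure X} {ν : Measure Y}

theorem lintegral_energy_eq [SFinite μ] [SFinite ν] {F : X → Y → ENNReal} {k : Y → Y → ENNReal}
    (hF : Measurable F.uncurry) (hk : Measurable k.uncurry) :
    ∫⁻ p, ∫⁻ q, ∫⁻ γ, ∫⁻ γ', k γ γ' * (F p γ * F q γ') ∂ν ∂ν ∂μ ∂μ =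
      ∫⁻ γ', ∫⁻ γ, k γ γ' * ((∫⁻ p, F p γ ∂μ) * ∫⁻ q, F q γ' ∂μ) ∂ν ∂ν := by
  calc
    _ = ∫⁻ p, ∫⁻ q, ∫⁻ w, k w.1 w.2 * (F p w.1 * F q w.2) ∂ν.prod ν ∂μ ∂μ :=
      lintegral_congr fun p => lintegral_congr fun q => lintegral_lintegral (by fun_prop)
    _ = ∫⁻ v, ∫⁻ w, k w.1 w.2 * (F v.1 w.1 * F v.2 w.2) ∂ν.prod ν ∂μ.prod μ :=
      lintegral_lintegral (by fun_prop)
    _ = ∫⁻ w, ∫⁻ v, k w.1 w.2 * (F v.1 w.1 * F v.2 w.2) ∂μ.prod μ ∂ν.prod ν :=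
      lintegral_lintegral_swap (by fun_prop)
    _ = ∫⁻ w, k w.1 w.2 * ((∫⁻ p, F p w.1 ∂μ) * ∫⁻ q, F q w.2 ∂μ) ∂ν.prod ν := by
      refine lintegral_congr fun w => ?_
      rw [lintegral_const_mul _ (by fun_prop),
        lintegral_prod_mul (f := (F · w.1)) (g := (F · w.2)) (by fun_prop) (by fun_prop)]
    _ = _ := lintegral_prod_symm' _ (by fun_prop)

theorem lintegral_energy_le {k : Y → Y → ENNReal} (hk : Measurable k.uncurry) {P : Y → ENNReal}
    (hP : Measurable P) {K M : ENNReal} (hK : ∀ᵐ γ' ∂ν, ∫⁻ γ, k γ γ' ∂ν ≤ K)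
    (hM : ∀ γ, P γ ≤ M) :
    ∫⁻ γ', ∫⁻ γ, k γ γ' * (P γ * P γ') ∂ν ∂ν ≤ K * M * ∫⁻ γ, P γ ∂ν := by
  rw [← lintegral_const_mul _ hP]
  refine lintegral_mono_ae (hK.mono fun γ' hγ' => ?_)
  calc
    ∫⁻ γ, k γ γ' * (P γ * P γ') ∂ν ≤ ∫⁻ γ, k γ γ' * (M * P γ') ∂ν := by gcongr; exact hM _
    _ = (∫⁻ γ, k γ γ' ∂ν) * (M * P γ') := lintegral_mul_const _ (by fun_prop)
    _ ≤ K * M * P γ' := by rw [mul_assoc]; gcongr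

theorem lintegral_prod_kernel_mul_le [SFinite μ] {h : X → X → ENNReal} {f : X → ENNReal}
    (hh : Measurable h.uncurry) (hf : Measurable f) {K : ENNReal}
    (hK : ∀ᵐ z ∂μ, ∫⁻ y, h y z ∂μ ≤ K) :
    ∫⁻ p, h p.1 p.2 * f p.2 ∂μ.prod μ ≤ K * ∫⁻ z, f z ∂μ := by
  rw [lintegral_prod_symm' _ (by fun_prop), ← lintegral_const_mul _ hf]
  refine lintegral_mono_ae (hK.mono fun z hz => ?_)
  dsimp only
  rw [lintegral_mul_const _ (by fun_prop)]
  gcongr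

theorem lintegral_sixfold_le [SFinite μ] [SFinite ν] {h : X → X → ENNReal} {k : Y → Y → ENNReal}
    {g : X → Y → ENNReal} (hh : Measurable h.uncurry) (hk : Measurable k.uncurry)
    (hg : Measurable g.uncurry) {H K N : ENNReal} (hH : ∀ᵐ z ∂μ, ∫⁻ y, h y z ∂μ ≤ H)
    (hK : ∀ᵐ γ' ∂ν, ∫⁻ γ, k γ γ' ∂ν ≤ K) (hN : ∀ z, ∫⁻ γ, g z γ ∂ν ≤ N)
    (hN' : ∀ γ, ∫⁻ z, g z γ ∂μ ≤ N) :
    ∫⁻ y, ∫⁻ z, ∫⁻ y', ∫⁻ z', ∫⁻ γ, ∫⁻ γ',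
        k γ γ' * ((h y z * g z γ) * (h y' z' * g z' γ')) ∂ν ∂ν ∂μ ∂μ ∂μ ∂μ ≤
      H ^ 2 * K * N ^ 2 * μ univ := by
  let F : X × X → Y → ENNReal := fun p γ => h p.1 p.2 * g p.2 γ
  have hF : Measurable F.uncurry := by fun_prop
  let P : Y → ENNReal := fun γ => ∫⁻ p, F p γ ∂μ.prod μ
  have hP : Measurable P := by fun_prop
  have P_le γ : P γ ≤ H * N :=
    calc
      P γ ≤ H * ∫⁻ z, g z γ ∂μ := lintegral_prod_kernel_mul_le (f := (g · γ)) hh (by fun_prop) hH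
      _ ≤ H * N := by gcongr; exact hN' γ
  have lintegral_P_le : ∫⁻ γ, P γ ∂ν ≤ H * (N * μ univ) :=
    calc
      ∫⁻ γ, P γ ∂ν = ∫⁻ p, h p.1 p.2 * ∫⁻ γ, g p.2 γ ∂ν ∂μ.prod μ := by
        rw [lintegral_lintegral_swap (by fun_prop)]
        exact lintegral_congr fun p => lintegral_const_mul _ (by fun_prop)
      _ ≤ H * ∫⁻ z, ∫⁻ γ, g z γ ∂ν ∂μ := lintegral_prod_kernel_mul_le hh (by fun_prop) hH
      _ ≤ H * ∫⁻ _, N ∂μ := by gcongr; exact hN _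
      _ = H * (N * μ univ) := by rw [lintegral_const]
  calc
    _ = ∫⁻ p, ∫⁻ q, ∫⁻ γ, ∫⁻ γ', k γ γ' * (F p γ * F q γ') ∂ν ∂ν ∂μ.prod μ ∂μ.prod μ := by
      rw [lintegral_prod _ (by fun_prop)]
      refine lintegral_congr fun y => lintegral_congr fun z => ?_
      rw [lintegral_prod _ (by fun_prop)]
    _ = ∫⁻ γ', ∫⁻ γ, k γ γ' * (P γ * P γ') ∂ν ∂ν := lintegral_energy_eq hF hk
    _ ≤ K * (H * N) * ∫⁻ γ, P γ ∂ν := lintegral_energy_le hk hP hK P_le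
    _ ≤ K * (H * N) * (H * (N * μ univ)) := by gcongr
    _ = H ^ 2 * K * N ^ 2 * μ univ := by ring

theorem enorm_integral_le_setLIntegral {V : Type*} [NormedAddCommGroup V] [NormedSpace ℝ V]
    {f : X → V} {F : X → ENNReal} {s : Set X} (hs : MeasurableSet s) (hfs : ∀ x ∉ s, f x = 0)
    (hfF : ∀ x ∈ s, ‖f x‖ₑ ≤ F x) :
    ‖∫ x, f x ∂μ‖ₑ ≤ ∫⁻ x in s, F x ∂μ := by
  rw [← setIntegral_eq_integral_of_forall_compl_eq_zero hfs]
  exact (enorm_integral_le_lintegral_enorm _).trans (setLIntegral_mono' hs hfF)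

theorem enorm_integral_sixfold_le [SFinite μ] {B B' : Set X} (hB : MeasurableSet B)
    (hB' : MeasurableSet B') {φ₁ φ₂ : X → ℝ} {k g : X → X → ℝ} (hk : Measurable k.uncurry)
    (hg : Measurable g.uncurry) {M₁ M₂ H K N : ENNReal} (hφ₁ : ∀ y ∉ B, φ₁ y = 0)
    (hφ₂ : ∀ z ∉ B, φ₂ z = 0) (hM₁ : ∀ y, ‖φ₁ y‖ₑ ≤ M₁)
    (hM₂ : ∀ z, ‖φ₂ z‖ₑ ≤ M₂) (hgB : ∀ z ∈ B, ∀ γ ∉ B', g z γ = 0)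
    (hH : ∀ z ∈ B, ∫⁻ y in B, ‖k y z‖ₑ ∂μ ≤ H) (hK : ∀ γ' ∈ B', ∫⁻ γ in B', ‖k γ γ'‖ₑ ∂μ ≤ K)
    (hN : ∀ z, ∫⁻ γ, ‖g z γ‖ₑ ∂μ ≤ N) (hN' : ∀ γ, ∫⁻ z, ‖g z γ‖ₑ ∂μ ≤ N) :
    ‖∫ y, ∫ z, ∫ y', ∫ z', ∫ γ, ∫ γ', φ₁ y * φ₂ z * φ₁ y' * φ₂ z' *
        k y z * k y' z' * k γ γ' * g z γ * g z' γ' ∂μ ∂μ ∂μ ∂μ ∂μ ∂μ‖ₑ ≤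
      (M₁ * M₂ * H) ^ 2 * K * N ^ 2 * μ B := by
  calc
    _ ≤ ∫⁻ y in B, ∫⁻ z in B, ∫⁻ y' in B, ∫⁻ z' in B, ∫⁻ γ in B', ∫⁻ γ' in B',
          ‖k γ γ'‖ₑ * ((M₁ * M₂ * ‖k y z‖ₑ * ‖g z γ‖ₑ) * (M₁ * M₂ * ‖k y' z'‖ₑ * ‖g z' γ'‖ₑ))
          ∂μ ∂μ ∂μ ∂μ ∂μ ∂μ := by
      refine enorm_integral_le_setLIntegral hB (fun y hy => by simp [hφ₁ y hy]) fun y _ =>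
        enorm_integral_le_setLIntegral hB (fun z hz => by simp [hφ₂ z hz]) fun z hz =>
        enorm_integral_le_setLIntegral hB (fun y' hy' => by simp [hφ₁ y' hy']) fun y' _ =>
        enorm_integral_le_setLIntegral hB (fun z' hz' => by simp [hφ₂ z' hz']) fun z' hz' =>
        enorm_integral_le_setLIntegral hB' (fun γ hγ => by simp [hgB z hz γ hγ]) fun γ _ =>
        enorm_integral_le_setLIntegral hB' (fun γ' hγ' => by simp [hgB z' hz' γ' hγ']) fun γ' _ =>
        ?_
      simp only [enorm_mul]
      calc
        _ ≤ M₁ * M₂ * M₁ * M₂ *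
            ‖k y z‖ₑ * ‖k y' z'‖ₑ * ‖k γ γ'‖ₑ * ‖g z γ‖ₑ * ‖g z' γ'‖ₑ := by
          gcongr <;> apply_assumption
        _ = _ := by ring
    _ ≤ (M₁ * M₂ * H) ^ 2 * K * N ^ 2 * μ.restrict B univ := by
      refine lintegral_sixfold_le (h := fun y z => M₁ * M₂ * ‖k y z‖ₑ) (by fun_prop)
        (by fun_prop) (by fun_prop) ?_ (ae_restrict_of_forall_mem hB' hK)
        (fun z => (setLIntegral_le_lintegral _ _).trans (hN z))
        (fun γ => (setLIntegral_le_lintegral _ _).trans (hN' γ))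
      refine ae_restrict_of_forall_mem hB fun z hz => ?_
      rw [lintegral_const_mul _ (by fun_prop)]
      gcongr
      exact hH z hz
    _ = (M₁ * M₂ * H) ^ 2 * K * N ^ 2 * μ B := by rw [Measure.restrict_apply_univ]

end Tonelli

/-! ### Radial integrals -/

section Radial

variable {E : Type*} [NormedAddCommGroup E] [NormedSpace ℝ E] [FiniteDimensional ℝ E]
  [Nontrivial E] [MeasurableSpace E] [BorelSpace E] (μ : Measure E) [μ.IsAddHaarMeasure]

open Module (finrank)

theorem lintegral_ball_fun_norm {f F : ℝ → ℝ} {ρ : ℝ} (hρ : 0 ≤ ρ)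
    (hFc : ContinuousOn F (Icc 0 ρ))
    (hF : ∀ r ∈ Ioo 0 ρ, HasDerivAt F (r ^ (finrank ℝ E - 1) * f r) r)
    (hf : ∀ r ∈ Ico 0 ρ, 0 ≤ f r) :
    ∫⁻ x in ball (0 : E) ρ, ENNReal.ofReal (f ‖x‖) ∂μ =
      ENNReal.ofReal (finrank ℝ E * μ.real (ball 0 1) * (F ρ - F 0)) := by
  have integrableOn_deriv : IntegrableOn (fun r => r ^ (finrank ℝ E - 1) * f r) (Ioc 0 ρ) :=
    intervalIntegral.integrableOn_deriv_of_nonneg hFc hF fun r hr =>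
      mul_nonneg (pow_nonneg hr.1.le _) (hf r ⟨hr.1.le, hr.2⟩)
  have integrable : IntegrableOn (fun x => f ‖x‖) (ball (0 : E) ρ) μ :=
    (integrableOn_fun_norm_addHaar μ).2 (integrableOn_deriv.mono_set Ioo_subset_Ioc_self)
  have integral_Ioi : ∫ r in Ioi 0, r ^ (finrank ℝ E - 1) • (Iio ρ).indicator f r = F ρ - F 0 :=
    calc
      _ = ∫ r in Ioi 0 ∩ Iio ρ, r ^ (finrank ℝ E - 1) * f r := by
        rw [← setIntegral_indicator measurableSet_Iio]
        simp only [smul_eq_mul, indicator_mul_right]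
      _ = ∫ r in 0..ρ, r ^ (finrank ℝ E - 1) * f r := by
        rw [Ioi_inter_Iio, intervalIntegral.integral_of_le hρ, integral_Ioc_eq_integral_Ioo]
      _ = F ρ - F 0 := intervalIntegral.integral_eq_sub_of_hasDerivAt_of_le hρ hFc hF
        ((intervalIntegrable_iff_integrableOn_Ioc_of_le hρ).2 integrableOn_deriv)
  have nonneg : 0 ≤ᵐ[μ.restrict (ball 0 ρ)] fun x : E => f ‖x‖ :=
    ae_restrict_of_forall_mem measurableSet_ball fun x hx =>
      hf _ ⟨norm_nonneg x, mem_ball_zero_iff.1 hx⟩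
  rw [← ofReal_integral_eq_lintegral_ofReal integrable nonneg,
    ← integral_indicator measurableSet_ball]
  have indicator_ball (x : E) :
      (ball 0 ρ).indicator (fun x : E => f ‖x‖) x = (Iio ρ).indicator f ‖x‖ := by
    simp only [indicator, mem_ball_zero_iff, mem_Iio]
  simp only [indicator_ball]
  rw [integral_fun_norm_addHaar, integral_Ioi, nsmul_eq_mul, smul_eq_mul, mul_assoc]

theorem lintegral_ball_norm_rpow_neg {β ρ : ℝ} (hβ : β < finrank ℝ E) (hρ : 0 ≤ ρ) :
    ∫⁻ x in ball (0 : E) ρ, ENNReal.ofReal (‖x‖ ^ (-β)) ∂μ =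
      ENNReal.ofReal (finrank ℝ E * μ.real (ball 0 1) *
        (ρ ^ (finrank ℝ E - β) / (finrank ℝ E - β))) := by
  have hd : (0 : ℝ) < finrank ℝ E - β := sub_pos.2 hβ
  have hasDerivAt_primitive (r : ℝ) (hr : 0 < r) :
      HasDerivAt (fun r => r ^ (finrank ℝ E - β) / (finrank ℝ E - β))
        (r ^ (finrank ℝ E - 1) * r ^ (-β)) r := by
    convert! (Real.hasDerivAt_rpow_const (p := finrank ℝ E - β) (.inl hr.ne')).div_const
      (finrank ℝ E - β) using 1
    rw [mul_div_cancel_left₀ _ hd.ne', ← Real.rpow_natCast, ← Real.rpow_add hr,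
      Nat.cast_pred Module.finrank_pos]
    ring_nf
  rw [lintegral_ball_fun_norm μ (f := (· ^ (-β)))
    (F := fun r => r ^ (finrank ℝ E - β) / (finrank ℝ E - β)) hρ
    ((Real.continuous_rpow_const hd.le).div_const _).continuousOn
    (fun r hr => hasDerivAt_primitive r hr.1) fun r hr => Real.rpow_nonneg hr.1 _,
    Real.zero_rpow hd.ne', zero_div, sub_zero]

end Radial

theorem setLIntegral_ball_sub_le {E : Type*} [SeminormedAddCommGroup E] [MeasurableSpace E]
    [OpensMeasurableSpace E] [MeasurableAdd E] (μ : Measure E) [μ.IsAddRightInvariant]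
    (f : E → ENNReal) {ρ : ℝ} {z : E} (hz : z ∈ ball 0 ρ) :
    ∫⁻ y in ball 0 ρ, f (y - z) ∂μ ≤ ∫⁻ x in ball 0 (2 * ρ), f x ∂μ := by
  rw [← lintegral_indicator measurableSet_ball, ← lintegral_indicator measurableSet_ball,
    ← lintegral_sub_right_eq_self ((ball 0 (2 * ρ)).indicator f) z]
  refine lintegral_mono (indicator_le fun y hy => ?_)
  have : y - z ∈ ball 0 (2 * ρ) := by
    rw [mem_ball_zero_iff] at *
    linarith [norm_sub_le y z]
  rw [indicator_of_mem this]

theorem volume_real_ball_fin_two : (volume : Measure E2).real (ball 0 1) = π := by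
  simp [Measure.real, Real.pi_nonneg]

theorem setLIntegral_ball_enorm_norm_sub_rpow_le {β ρ : ℝ} (hβ : β < 2) {z : E2}
    (hz : z ∈ ball 0 ρ) :
    ∫⁻ y in ball 0 ρ, ‖‖y - z‖ ^ (-β)‖ₑ ≤
      ENNReal.ofReal (2 * π / (2 - β) * (2 * ρ) ^ (2 - β)) := by
  have hρ : 0 ≤ ρ := (norm_nonneg z).trans (mem_ball_zero_iff.1 hz).le
  calc
    ∫⁻ y in ball 0 ρ, ‖‖y - z‖ ^ (-β)‖ₑ ≤ ∫⁻ x in ball (0 : E2) (2 * ρ), ‖‖x‖ ^ (-β)‖ₑ :=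
      setLIntegral_ball_sub_le volume (fun x => ‖‖x‖ ^ (-β)‖ₑ) hz
    _ = ∫⁻ x in ball (0 : E2) (2 * ρ), ENNReal.ofReal (‖x‖ ^ (-β)) := by
      simp only [Real.enorm_of_nonneg (Real.rpow_nonneg (norm_nonneg _) _)]
    _ = ENNReal.ofReal (2 * π / (2 - β) * (2 * ρ) ^ (2 - β)) := by
      rw [lintegral_ball_norm_rpow_neg volume (by simpa) (by positivity), volume_real_ball_fin_two,
        finrank_euclideanSpace_fin]
      push_cast
      ring_nf

/-! ### The wave kernel -/

theorem G_nonneg (t : ℝ) (x : E2) : 0 ≤ G t x := by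
  unfold G; split_ifs <;> positivity

@[fun_prop]
theorem measurable_G (t : ℝ) : Measurable (G t) :=
  Measurable.ite (measurableSet_lt (by fun_prop) (by fun_prop)) (by fun_prop) (by fun_prop)

theorem G_eq_zero {t : ℝ} {x : E2} (h : t ≤ ‖x‖) : G t x = 0 :=
  if_neg h.not_gt

theorem lintegral_enorm_G (t : ℝ) : ∫⁻ x, ‖G t x‖ₑ = ENNReal.ofReal t := by
  rcases le_or_gt t 0 with ht | ht
  · simp [G_eq_zero (ht.trans (norm_nonneg _)), ENNReal.ofReal_of_nonpos ht]
  have enorm_G (x : E2) : ‖G t x‖ₑ = (ball 0 t).indicator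
      (fun x => ENNReal.ofReal ((2 * π * √(t ^ 2 - ‖x‖ ^ 2))⁻¹)) x := by
    rw [Real.enorm_of_nonneg (G_nonneg t x)]
    simp only [G, indicator, mem_ball_zero_iff, apply_ite ENNReal.ofReal, ENNReal.ofReal_zero]
  have hasDerivAt_primitive (r : ℝ) (hr : r ∈ Ioo 0 t) :
      HasDerivAt (fun r => -√(t ^ 2 - r ^ 2) / (2 * π))
        (r ^ (Module.finrank ℝ E2 - 1) * (2 * π * √(t ^ 2 - r ^ 2))⁻¹) r := by
    have pos : 0 < t ^ 2 - r ^ 2 := by nlinarith [hr.1, hr.2]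
    convert! (((hasDerivAt_pow 2 r).const_sub (t ^ 2)).sqrt pos.ne').neg.div_const (2 * π) using 1
    simp only [finrank_euclideanSpace_fin, Nat.add_one_sub_one, pow_one, Nat.cast_ofNat]
    field_simp
  simp only [enorm_G]
  rw [lintegral_indicator measurableSet_ball,
    lintegral_ball_fun_norm volume (f := fun r => (2 * π * √(t ^ 2 - r ^ 2))⁻¹)
      (F := fun r => -√(t ^ 2 - r ^ 2) / (2 * π)) ht.le (by fun_prop) hasDerivAt_primitive
      (fun r _ => by positivity), volume_real_ball_fin_two, finrank_euclideanSpace_fin]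
  congr 1
  simp only [Nat.cast_ofNat, sub_self, sqrt_zero, zero_pow two_ne_zero, sub_zero,
    Real.sqrt_sq ht.le, neg_zero, zero_div]
  field_simp
  ring

theorem enorm_phi_le (t R s : ℝ) (y : E2) : ‖phi t R s y‖ₑ ≤ ENNReal.ofReal (t - s) :=
  calc
    ‖phi t R s y‖ₑ ≤ ∫⁻ x in closedBall 0 R, ‖G (t - s) (x - y)‖ₑ :=
      enorm_integral_le_lintegral_enorm _
    _ ≤ ∫⁻ x, ‖G (t - s) (x - y)‖ₑ := setLIntegral_le_lintegral _ _
    _ = ENNReal.ofReal (t - s) := by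
      rw [lintegral_sub_right_eq_self (‖G (t - s) ·‖ₑ) y, lintegral_enorm_G]

theorem phi_eq_zero {t R s : ℝ} {y : E2} (hy : R + (t - s) ≤ ‖y‖) : phi t R s y = 0 := by
  refine setIntegral_eq_zero_of_forall_eq_zero fun x hx => G_eq_zero ?_
  rw [mem_closedBall_zero_iff] at hx
  linarith [norm_le_norm_add_norm_sub' y x, norm_sub_rev x y]

/-- The inner integral over `y, z, y', z', γ, γ'` at a fixed time `r`, so that `𝒯_s(R)` is the
integral of `sixfoldIntegral β t₁ t₂ R s` over `[0, s]`. -/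
def sixfoldIntegral (β t₁ t₂ R s r : ℝ) : ℝ :=
  ∫ y : E2, ∫ z : E2, ∫ y' : E2, ∫ z' : E2, ∫ γ : E2, ∫ γ' : E2,
    phi t₁ R s y * phi t₂ R s z * phi t₁ R s y' * phi t₂ R s z' *
      ‖y - z‖ ^ (-β) * ‖y' - z'‖ ^ (-β) * ‖γ - γ'‖ ^ (-β) *
      G (s - r) (z - γ) * G (s - r) (z' - γ')

theorem enorm_sixfoldIntegral_le {β t₁ t₂ R s r : ℝ} (hβ : β < 2) (ht₁R : t₁ ≤ R) (ht₂R : t₂ ≤ R)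
    (hs : 0 ≤ s) (hsR : s ≤ R) (hr : 0 ≤ r) :
    ‖sixfoldIntegral β t₁ t₂ R s r‖ₑ ≤
      (.ofReal t₁ * .ofReal t₂ * .ofReal (2 * π / (2 - β) * (2 * (2 * R)) ^ (2 - β))) ^ 2 *
        .ofReal (2 * π / (2 - β) * (2 * (3 * R)) ^ (2 - β)) * .ofReal s ^ 2 *
        volume (ball (0 : E2) (2 * R)) := by
  have phi_eq_zero_of_notMem {t : ℝ} (ht : t ≤ R) (y : E2) (hy : y ∉ ball 0 (2 * R)) :
      phi t R s y = 0 := by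
    rw [mem_ball_zero_iff, not_lt] at hy
    exact phi_eq_zero (by linarith)
  have enorm_phi_le_ofReal (t : ℝ) (y : E2) : ‖phi t R s y‖ₑ ≤ .ofReal t :=
    (enorm_phi_le t R s y).trans (ENNReal.ofReal_le_ofReal (by linarith))
  have G_eq_zero_of_notMem (z : E2) (hz : z ∈ ball 0 (2 * R)) (γ : E2) (hγ : γ ∉ ball 0 (3 * R)) :
      G (s - r) (z - γ) = 0 := by
    rw [mem_ball_zero_iff] at hz hγ
    exact G_eq_zero (by linarith [norm_le_norm_add_norm_sub z γ])
  have mass_G_le : ENNReal.ofReal (s - r) ≤ .ofReal s := ENNReal.ofReal_le_ofReal (by linarith)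
  exact enorm_integral_sixfold_le measurableSet_ball measurableSet_ball
    (k := fun y z : E2 => ‖y - z‖ ^ (-β)) (g := fun z γ => G (s - r) (z - γ))
    (by fun_prop) (by fun_prop) (phi_eq_zero_of_notMem ht₁R) (phi_eq_zero_of_notMem ht₂R)
    (enorm_phi_le_ofReal t₁) (enorm_phi_le_ofReal t₂) G_eq_zero_of_notMem
    (fun _ => setLIntegral_ball_enorm_norm_sub_rpow_le hβ)
    (fun _ => setLIntegral_ball_enorm_norm_sub_rpow_le hβ)
    (fun z => by rwa [lintegral_sub_left_eq_self (‖G (s - r) ·‖ₑ) z, lintegral_enorm_G])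
    (fun γ => by rwa [lintegral_sub_right_eq_self (‖G (s - r) ·‖ₑ) γ, lintegral_enorm_G])

theorem norm_sixfoldIntegral_le {β t₁ t₂ R s r : ℝ} (hβ : β < 2) (ht₁ : 0 ≤ t₁) (ht₂ : 0 ≤ t₂)
    (ht₁R : t₁ ≤ R) (ht₂R : t₂ ≤ R) (hs : 0 < s) (hsR : s ≤ R) (hr : 0 ≤ r) :
    ‖sixfoldIntegral β t₁ t₂ R s r‖ ≤
      4 * π * (2 * π / (2 - β)) ^ 3 * (4 ^ (2 - β)) ^ 2 * 6 ^ (2 - β) * (t₁ * t₂) ^ 2 * s ^ 2 *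
        R ^ (8 - 3 * β) := by
  have hR₀ : 0 < R := hs.trans_le hsR
  have hβ' : 0 < 2 - β := sub_pos.2 hβ
  have rpow_R : R ^ (8 - 3 * β) = (R ^ (2 - β)) ^ 3 * R ^ 2 := by
    rw [← Real.rpow_natCast, ← Real.rpow_natCast, ← Real.rpow_mul hR₀.le, ← Real.rpow_add hR₀]
    congr 1
    push_cast
    ring
  have h := enorm_sixfoldIntegral_le hβ ht₁R ht₂R hs.le hsR hr
  simp (disch := positivity) only [EuclideanSpace.volume_ball_fin_two, ← ENNReal.ofReal_pow,
    ← ENNReal.ofReal_mul, ← ofReal_norm, ENNReal.ofReal_le_ofReal_iff] at h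
  refine h.trans_eq ?_
  rw [rpow_R, ← mul_assoc 2 2, ← mul_assoc 2 3, Real.mul_rpow (by norm_num) hR₀.le,
    Real.mul_rpow (by norm_num) hR₀.le]
  norm_num only
  ring

theorem stmt_18_general (β t₁ t₂ : ℝ) (hβ : β < 2) :
    ∃ C : ℝ, ∀ R s : ℝ, max t₁ t₂ ≤ R → 0 < s → s ≤ min t₁ t₂ →
      ∫ r in (0 : ℝ)..s, sixfoldIntegral β t₁ t₂ R s r ≤ C * R ^ (8 - 3 * β) := by
  let c := 4 * π * (2 * π / (2 - β)) ^ 3 * (4 ^ (2 - β)) ^ 2 * 6 ^ (2 - β) * (t₁ * t₂) ^ 2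
  refine ⟨c * min t₁ t₂ ^ 3, fun R s hR hs hst => ?_⟩
  have hc : 0 ≤ c := by
    have : 0 < 2 - β := sub_pos.2 hβ
    positivity
  obtain ⟨ht₁R, ht₂R⟩ := max_le_iff.1 hR
  obtain ⟨hst₁, hst₂⟩ := le_min_iff.1 hst
  have hsR : s ≤ R := hst₁.trans ht₁R
  have hR₀ : 0 ≤ R := hs.le.trans hsR
  calc
    ∫ r in (0 : ℝ)..s, sixfoldIntegral β t₁ t₂ R s r
      ≤ ‖∫ r in (0 : ℝ)..s, sixfoldIntegral β t₁ t₂ R s r‖ := Real.le_norm_self _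
    _ ≤ c * s ^ 2 * R ^ (8 - 3 * β) * |s - 0| :=
      intervalIntegral.norm_integral_le_of_norm_le_const fun r hr =>
        norm_sixfoldIntegral_le hβ (hs.le.trans hst₁) (hs.le.trans hst₂) ht₁R ht₂R hs hsR
          (uIoc_of_le hs.le ▸ hr).1.le
    _ = c * s ^ 3 * R ^ (8 - 3 * β) := by rw [sub_zero, abs_of_pos hs]; ring
    _ ≤ c * min t₁ t₂ ^ 3 * R ^ (8 - 3 * β) :=
      mul_le_mul_of_nonneg_right (mul_le_mul_of_nonneg_left (pow_le_pow_left₀ hs.le hst 3) hc)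
        (Real.rpow_nonneg hR₀ _)

/-- For `β ∈ (0,2)` and `t₁, t₂ > 0` there is a constant `C` (depending only on `β, t₁, t₂`)
such that for all `R ≥ t₁ + t₂` and all `s ∈ (0, min(t₁,t₂)]`, `𝒯_s(R) ≤ C R^{8-3β}`. -/
theorem stmt_18 (β t₁ t₂ : ℝ) (hβ0 : 0 < β) (hβ2 : β < 2) (ht₁ : 0 < t₁) (ht₂ : 0 < t₂) :
    ∃ C : ℝ, ∀ R s : ℝ, t₁ + t₂ ≤ R → 0 < s → s ≤ min t₁ t₂ →
      (∫ r in (0:ℝ)..s, ∫ y : E2, ∫ z : E2, ∫ y' : E2, ∫ z' : E2, ∫ γ : E2, ∫ γ' : E2,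
          phi t₁ R s y * phi t₂ R s z * phi t₁ R s y' * phi t₂ R s z' *
            ‖y - z‖ ^ (-β) * ‖y' - z'‖ ^ (-β) * ‖γ - γ'‖ ^ (-β) *
            G (s - r) (z - γ) * G (s - r) (z' - γ')) ≤
        C * R ^ (8 - 3 * β) := by
  obtain ⟨C, hC⟩ := stmt_18_general β t₁ t₂ hβ2
  exact ⟨C, fun R s hR => hC R s (max_le (by linarith) (by linarith))⟩
end
end
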